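/- Let r ≥ 1 and let W ⊆ ℕ^4 be an A_r(4)-regular staircase. Then for all i ≠ j in {1, 2, 3, 4}: r + 1 ≤ l_{{i}} + l_{{j}} − l_{{i,j}} ≤ r + 2. -/

import Mathlib

/-!
Put `n = r + 1` and fix `i ≠ j`. Write `(a, b, c)` for the exponent vector with entry `a` at `i`,
`b` at `j` and `c` at the two remaining coordinates.

As `W` contains `0`, it contains neither `(1,1,1,1)` nor any `n • e_s`, so each element of `W` has
a zero coordinate and all its coordinates are `< n`. The representative in `W` of the class of
`(a, b, c)` is therefore one of the three vectors obtained by subtracting `a`, `b` or `c` from all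
entries modulo `n` (`exists_mem_triple`).

*Lower bound.* Let `p = n - l_i`, `q = n - l_j`, `m = l_i + l_j - n`. If `(m, m, 0) ∈ W`, then its
translate `(0, 0, p + q)` is not in `W`. The class of `(0, p, p + q)` has the three candidates
`(0, p, p + q)`, `(l_i, 0, q)`, `(m, l_j, 0)`, none of which lies in `W`.

*Upper bound.* Let `L = l_{i,j}` and suppose `a < l_i`, `b < l_j`, `a + b = n + L`. Put
`p = n - a`, `q = n - b`. As `(L, L, 0) ∉ W`, the class of `(0, p, p + q)` has the candidates
`(0, p, p + q)`, `(a, 0, q)`, `(L, b, 0)`. The first dominates `(0, p, p)`, the translate of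
`(a, 0, 0) ∈ W`; the second dominates `(q, 0, q)`, the translate of `(0, b, 0) ∈ W`; the third
dominates `(L, L, 0)`. Again none lies in `W`.
-/

/-- The reduction map sending an exponent vector `K ∈ ℕ^4` to its class in the group
`(ℤ/(r+1))^4 / ⟨(1,1,1,1)⟩` of order `(r+1)^3`. -/
noncomputable def qmapAr (r : ℕ) (K : Fin 4 → ℕ) :
    (Fin 4 → ZMod (r + 1)) ⧸
      Submodule.span (ZMod (r + 1)) ({fun _ => 1} : Set (Fin 4 → ZMod (r + 1))) :=
  Submodule.Quotient.mk (fun s => (K s : ZMod (r + 1)))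

/-- `W ⊆ ℕ^4` is an `A_r(4)`-regular staircase: downward closed, and mapping bijectively
onto `(ℤ/(r+1))^4/⟨(1,1,1,1)⟩` under reduction mod `r+1`. -/
def IsArRegularStaircase (r : ℕ) (W : Finset (Fin 4 → ℕ)) : Prop :=
  (∀ K ∈ W, ∀ K' : Fin 4 → ℕ, (∀ s, K' s ≤ K s) → K' ∈ W)
  ∧ Set.BijOn (qmapAr r) ↑W Set.univ

/-- The exponent vector with entry `a` at `i`, `b` at `j` and `c` at all other coordinates. -/
def triple (i j : Fin 4) (a b c : ℕ) : Fin 4 → ℕ :=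
  fun t => if t = i then a else if t = j then b else c

/-- The residue of `x - y` modulo `n`, for `x, y < n`. -/
def subMod (n x y : ℕ) : ℕ := if y ≤ x then x - y else n + x - y

lemma qmapAr_eq_iff (r : ℕ) (K K' : Fin 4 → ℕ) :
    qmapAr r K = qmapAr r K' ↔ ∃ c : ℤ, ∀ t, ((r + 1 : ℕ) : ℤ) ∣ (K t : ℤ) - K' t - c := by
  unfold qmapAr
  rw [Submodule.Quotient.eq, Submodule.mem_span_singleton]
  constructor
  · rintro ⟨a, ha⟩
    obtain ⟨c, rfl⟩ := ZMod.intCast_surjective a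
    refine ⟨c, fun t => ?_⟩
    have := congrFun ha t
    simp only [Pi.smul_apply, Pi.sub_apply, smul_eq_mul, mul_one] at this
    rw [← ZMod.intCast_zmod_eq_zero_iff_dvd]
    push_cast
    rw [this]; ring
  · rintro ⟨c, hc⟩
    refine ⟨c, funext fun t => ?_⟩
    have := (ZMod.intCast_zmod_eq_zero_iff_dvd _ (r + 1)).2 (hc t)
    push_cast at this
    simp only [Pi.smul_apply, Pi.sub_apply, smul_eq_mul, mul_one]
    exact (sub_eq_zero.1 this).symm

section
variable {r : ℕ} {W : Finset (Fin 4 → ℕ)}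

lemma eq_of_congr (hW : IsArRegularStaircase r W) {K K' : Fin 4 → ℕ} (hK : K ∈ W) (hK' : K' ∈ W)
    (c : ℤ) (h : ∀ t, ((r + 1 : ℕ) : ℤ) ∣ (K t : ℤ) - K' t - c) : K = K' :=
  hW.2.injOn hK hK' ((qmapAr_eq_iff r K K').2 ⟨c, h⟩)

lemma zero_mem (hW : IsArRegularStaircase r W) : (fun _ => 0) ∈ W := by
  obtain ⟨K, hK, -⟩ := hW.2.surjOn (Set.mem_univ (qmapAr r 0))
  exact hW.1 K hK _ fun s => Nat.zero_le _

lemma lt_of_mem (hW : IsArRegularStaircase r W) {K : Fin 4 → ℕ} (hK : K ∈ W) (s : Fin 4) :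
    K s < r + 1 := by
  by_contra! h
  have h1 : (fun t => if t = s then r + 1 else 0) ∈ W := by
    refine hW.1 K hK _ fun t => ?_
    split_ifs with hts
    · rw [hts]; exact h
    · exact Nat.zero_le _
  have h2 := eq_of_congr hW h1 (zero_mem hW) 0 fun t => by
    by_cases hts : t = s <;> simp [hts]
  simpa using congrFun h2 s

lemma exists_eq_zero (hW : IsArRegularStaircase r W) {K : Fin 4 → ℕ} (hK : K ∈ W) :
    ∃ s, K s = 0 := by
  by_contra! h
  have h1 : (fun _ => 1) ∈ W := hW.1 K hK _ fun t => Nat.one_le_iff_ne_zero.2 (h t)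
  have h2 := eq_of_congr hW h1 (zero_mem hW) 1 fun t => by simp
  simpa using congrFun h2 0

lemma eq_subMod {n x y k : ℕ} {c : ℤ} (hx : x < n) (hy : y < n) (hk : k < n)
    (h1 : (n : ℤ) ∣ (k : ℤ) - x - c) (h2 : (n : ℤ) ∣ (0 : ℤ) - y - c) : k = subMod n x y := by
  have h3 : (n : ℤ) ∣ (k : ℤ) - x + y := by
    have := dvd_sub h1 h2
    rwa [show (k : ℤ) - x - c - (0 - y - c) = k - x + y by ring] at this
  unfold subMod
  split_ifs with h
  · have := Int.eq_zero_of_abs_lt_dvd (x := (k : ℤ) - x + y) h3 (by rw [abs_lt]; omega)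
    omega
  · have h4 : (n : ℤ) ∣ (k : ℤ) - x + y - n := dvd_sub h3 dvd_rfl
    have := Int.eq_zero_of_abs_lt_dvd h4 (by rw [abs_lt]; omega)
    omega

/-- The class of any vector `K` with entries `< r + 1` has its representative in `W` of the form
`K - K s • (1,1,1,1)` reduced modulo `r + 1`, where `s` is a coordinate at which the
representative vanishes. -/
lemma exists_mem_subMod (hW : IsArRegularStaircase r W) (K : Fin 4 → ℕ) (hK : ∀ t, K t < r + 1) :
    ∃ s, (fun t => subMod (r + 1) (K t) (K s)) ∈ W := by
  obtain ⟨K', hK', he⟩ := hW.2.surjOn (Set.mem_univ (qmapAr r K))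
  obtain ⟨c, hc⟩ := (qmapAr_eq_iff r K' K).1 he
  obtain ⟨s, hs⟩ := exists_eq_zero hW hK'
  refine ⟨s, ?_⟩
  suffices h : (fun t => subMod (r + 1) (K t) (K s)) = K' by rw [h]; exact hK'
  funext t
  have h2 := hc s
  rw [hs] at h2
  exact (eq_subMod (hK t) (hK s) (lt_of_mem hW hK' t) (hc t) (by simpa using h2)).symm

lemma exists_mem_triple (hW : IsArRegularStaircase r W) (i j : Fin 4) {a b c : ℕ}
    (ha : a < r + 1) (hb : b < r + 1) (hc : c < r + 1) :
    triple i j 0 (subMod (r + 1) b a) (subMod (r + 1) c a) ∈ W ∨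
    triple i j (subMod (r + 1) a b) 0 (subMod (r + 1) c b) ∈ W ∨
    triple i j (subMod (r + 1) a c) (subMod (r + 1) b c) 0 ∈ W := by
  have key : ∀ x, (fun t => subMod (r + 1) (triple i j a b c t) x) =
      triple i j (subMod (r + 1) a x) (subMod (r + 1) b x) (subMod (r + 1) c x) := by
    intro x; funext t; unfold triple; split_ifs <;> rfl
  have self : ∀ x, subMod (r + 1) x x = 0 := by intro x; simp [subMod]
  obtain ⟨s, hs⟩ := exists_mem_subMod hW (triple i j a b c) (by
    intro t; unfold triple; split_ifs <;> assumption)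
  rw [key] at hs
  by_cases hi : s = i
  · left; simpa [triple, hi, self] using hs
  · by_cases hj : s = j
    · right; left
      have : triple i j a b c s = b := by simp only [triple, if_neg hi, if_pos hj]
      rwa [this, self] at hs
    · right; right
      have : triple i j a b c s = c := by simp only [triple, if_neg hi, if_neg hj]
      rwa [this, self] at hs

lemma triple_mono (hW : IsArRegularStaircase r W) {i j : Fin 4} {a b c a' b' c' : ℕ}
    (h : triple i j a b c ∈ W) (ha : a' ≤ a) (hb : b' ≤ b) (hc : c' ≤ c) :
    triple i j a' b' c' ∈ W := by
  refine hW.1 _ h _ fun t => ?_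
  unfold triple
  split_ifs <;> assumption

/-- Two congruent members of `W` of the shape `(a, b, c)` agree at `i` and at `j`. -/
lemma triple_inj (hW : IsArRegularStaircase r W) {i j : Fin 4} (hij : i ≠ j)
    {a b c a' b' c' : ℕ} (h : triple i j a b c ∈ W) (h' : triple i j a' b' c' ∈ W) (k : ℤ)
    (ha : ((r + 1 : ℕ) : ℤ) ∣ (a : ℤ) - a' - k) (hb : ((r + 1 : ℕ) : ℤ) ∣ (b : ℤ) - b' - k)
    (hc : ((r + 1 : ℕ) : ℤ) ∣ (c : ℤ) - c' - k) : a = a' ∧ b = b' := by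
  have := eq_of_congr hW h h' k fun t => by unfold triple; split_ifs <;> assumption
  have h1 := congrFun this i
  have h2 := congrFun this j
  simp only [triple, if_true, if_neg hij.symm] at h1 h2
  exact ⟨h1, h2⟩

end

/-- For an `A_r(4)`-regular staircase `W` with staircase heights `l S` (the least
positive `m` with `m·𝟙_S ∉ W`), for all `i ≠ j`:
`r+1 ≤ l {i} + l {j} − l {i,j} ≤ r+2` (stated without natural subtraction). -/
theorem Ar4_staircase_pair_bounds (r : ℕ) (hr : 1 ≤ r) (W : Finset (Fin 4 → ℕ))
    (hW : IsArRegularStaircase r W) (l : Finset (Fin 4) → ℕ)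
    (hl : ∀ S : Finset (Fin 4), S.Nonempty →
      IsLeast {m : ℕ | 0 < m ∧ (fun t => if t ∈ S then m else 0) ∉ W} (l S)) :
    ∀ i j : Fin 4, i ≠ j →
      l {i, j} + (r + 1) ≤ l {i} + l {j} ∧ l {i} + l {j} ≤ l {i, j} + (r + 2) := by
  intro i j hij
  have ei : ∀ m : ℕ, (fun t => if t ∈ ({i} : Finset (Fin 4)) then m else 0) =
      triple i j m 0 0 := by
    intro m; funext t; simp [triple]
  have ej : ∀ m : ℕ, (fun t => if t ∈ ({j} : Finset (Fin 4)) then m else 0) =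
      triple i j 0 m 0 := by
    intro m; funext t
    by_cases hi : t = i
    · subst hi; simp [triple, hij]
    · simp [triple, hi]
  have eij : ∀ m : ℕ, (fun t => if t ∈ ({i, j} : Finset (Fin 4)) then m else 0) =
      triple i j m m 0 := by
    intro m; funext t
    by_cases hi : t = i <;> simp [triple, hi]
  obtain ⟨⟨hi0, hiW⟩, hil⟩ := hl {i} (by simp)
  obtain ⟨⟨hj0, hjW⟩, hjl⟩ := hl {j} (by simp)
  obtain ⟨⟨hL0, hLW⟩, hLl⟩ := hl {i, j} (by simp)
  rw [ei] at hiW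
  rw [ej] at hjW
  rw [eij] at hLW
  replace hil : ∀ m, 0 < m → triple i j m 0 0 ∉ W → l {i} ≤ m :=
    fun m h0 h => hil ⟨h0, by rwa [ei]⟩
  replace hjl : ∀ m, 0 < m → triple i j 0 m 0 ∉ W → l {j} ≤ m :=
    fun m h0 h => hjl ⟨h0, by rwa [ej]⟩
  replace hLl : ∀ m, 0 < m → triple i j m m 0 ∉ W → l {i, j} ≤ m :=
    fun m h0 h => hLl ⟨h0, by rwa [eij]⟩
  generalize l {i} = A at *
  generalize l {j} = B at *
  generalize l {i, j} = L at *
  have bi : ∀ {a b c}, triple i j a b c ∈ W → a < r + 1 := fun {a b c} h => by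
    simpa [triple] using lt_of_mem hW h i
  have bj : ∀ {a b c}, triple i j a b c ∈ W → b < r + 1 := fun {a b c} h => by
    simpa [triple, hij.symm] using lt_of_mem hW h j
  have hA : A ≤ r + 1 := hil _ (by omega) fun h => by have := bi h; omega
  have hB : B ≤ r + 1 := hjl _ (by omega) fun h => by have := bj h; omega
  have hAB : r + 1 < A + B := by
    by_contra! hle
    rcases exists_mem_triple hW i j (a := A) (b := 0) (c := 0)
      (by omega) (by omega) (by omega) with h | h | h
    · refine hjW (triple_mono hW h le_rfl ?_ (Nat.zero_le _))
      unfold subMod; split_ifs <;> omega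
    · exact hiW (triple_mono hW h (by simp [subMod]) le_rfl (Nat.zero_le _))
    · exact hiW (triple_mono hW h (by simp [subMod]) (Nat.zero_le _) le_rfl)
  constructor
  · have hm : L ≤ A + B - (r + 1) := by
      refine hLl _ (by omega) fun hmem => ?_
      have hmn := bi hmem
      have hC : triple i j 0 0 (2 * (r + 1) - A - B) ∉ W := fun h => by
        have := (triple_inj hW hij hmem h ((A + B - (r + 1) : ℕ) : ℤ)
          (by simp) (by simp) ⟨-1, by push_cast; omega⟩).1
        omega
      rcases exists_mem_triple hW i j (a := 0) (b := r + 1 - A) (c := 2 * (r + 1) - A - B)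
        (by omega) (by omega) (by omega) with h | h | h
      · exact hC (triple_mono hW h le_rfl (Nat.zero_le _) (by simp [subMod]))
      · by_cases hA' : A = r + 1
        -- here `p = 0`, so the first two candidates coincide
        · refine hC (triple_mono hW h (Nat.zero_le _) le_rfl ?_)
          unfold subMod; split_ifs <;> omega
        · refine hiW (triple_mono hW h ?_ le_rfl (Nat.zero_le _))
          unfold subMod; split_ifs <;> omega
      · by_cases hB' : B = r + 1
        -- here `q = 0`, so the last two candidates coincide
        · refine hiW (triple_mono hW h ?_ (Nat.zero_le _) le_rfl)
          unfold subMod; split_ifs <;> omega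
        · refine hjW (triple_mono hW h (Nat.zero_le _) ?_ le_rfl)
          unfold subMod; split_ifs <;> omega
    omega
  · by_contra! hlt
    -- `a = A - 1` and `b = n + L - a ≤ B - 1` satisfy `a + b = n + L` exactly
    obtain ⟨a, rfl⟩ : ∃ a, A = a + 1 := ⟨A - 1, by omega⟩
    obtain ⟨b, hb⟩ : ∃ b, a + b = r + 1 + L := ⟨r + 1 + L - a, by omega⟩
    have haW : triple i j a 0 0 ∈ W := by
      by_contra h; have := hil a (by omega) h; omega
    have hbW : triple i j 0 b 0 ∈ W := by
      by_contra h; have := hjl b (by omega) h; omega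
    have ha' : triple i j 0 (r + 1 - a) (r + 1 - a) ∉ W := fun h => by
      have := (triple_inj hW hij haW h (a : ℤ) (by simp)
        ⟨-1, by push_cast; omega⟩ ⟨-1, by push_cast; omega⟩).1
      omega
    have hb' : triple i j (r + 1 - b) 0 (r + 1 - b) ∉ W := fun h => by
      have := (triple_inj hW hij hbW h (b : ℤ)
        ⟨-1, by push_cast; omega⟩ (by simp) ⟨-1, by push_cast; omega⟩).2
      omega
    rcases exists_mem_triple hW i j (a := 0) (b := r + 1 - a) (c := r + 1 - L)
      (by omega) (by omega) (by omega) with h | h | h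
    · refine ha' (triple_mono hW h le_rfl ?_ ?_) <;>
        unfold subMod <;> split_ifs <;> omega
    · refine hb' (triple_mono hW h ?_ le_rfl ?_) <;>
        unfold subMod <;> split_ifs <;> omega
    · refine hLW (triple_mono hW h ?_ ?_ le_rfl) <;>
        unfold subMod <;> split_ifs <;> omega
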